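/- Let n, d₁, d₂ ≥ 1, M₁ ∈ ℝ, and M₂ < −d₂. Let a : ℝⁿ × ℝ^{d₁} × ℝ^{d₂} → ℂ be smooth and satisfy, for all multi-indices α, β, γ, |∂_x^γ ∂_{ξ′}^α ∂_{ξ″}^β a(x,ξ′,ξ″)| ≤ C_{α,β,γ} ⟨(ξ′,ξ″)⟩^{M₁−|α|} ⟨ξ″⟩^{M₂−|β|} for all arguments, where ⟨·⟩ := (1+|·|²)^{1/2}, and let ψ ∈ C_c^∞(ℝ^{d₂}). Define b(x,ξ′) := ∫_{ℝ^{d₂}} a(x,ξ′,ξ″) ψ(⟨ξ′⟩^{−1/2} ξ″) dξ″. Then for all multi-indices α, γ there is C′ with |∂_x^γ ∂_{ξ′}^α b(x,ξ′)| ≤ C′ ⟨ξ′⟩^{M₁ − |α|/2} for all (x,ξ′). -/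

import Mathlib

open MeasureTheory

/-- The Japanese bracket `⟨v⟩ = (1 + |v|²)^{1/2}`. -/
noncomputable def jap {d : ℕ} (v : EuclideanSpace ℝ (Fin d)) : ℝ :=
  Real.sqrt (1 + ‖v‖ ^ 2)

/-- The Japanese bracket of a pair. -/
noncomputable def jap2 {d e : ℕ} (u : EuclideanSpace ℝ (Fin d))
    (v : EuclideanSpace ℝ (Fin e)) : ℝ :=
  Real.sqrt (1 + ‖u‖ ^ 2 + ‖v‖ ^ 2)

open Function Module
open scoped ContDiff Topology

/-!
Near each `(x, v)` the integrand `ψ(⟨v⟩^{-δ} w) a(x, v, w)` is supported in a fixed compact set of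
`w`, so all derivatives pass under the integral. The cutoff depends on `v` only through
`⟨v⟩^{-δ} w`, which stays bounded on its support, and `⟨v⟩^{-δ}` is a symbol of order `-δ`; hence
each `v`-derivative of the cutoff gains a full factor `⟨v⟩⁻¹`. For `δ ≤ 1` the support lies in
`‖w‖ ≲ ⟨v⟩`, where `⟨(v, w)⟩` is comparable to `⟨v⟩`. By the Leibniz rule the derivatives of the
integrand are `O(⟨v⟩^{M₁ - |α|} ⟨w⟩^{M₂})`, and `⟨w⟩^{M₂}` is integrable as soon as
`M₂ < -dim W`. The integral is therefore a symbol of order `M₁` even of type `(1, 0)`, for every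
`δ ≤ 1`.
-/

theorem iteratedFDeriv_eq_zero_of_eventuallyEq_zero {V E : Type*} [NormedAddCommGroup V]
    [NormedSpace ℝ V] [NormedAddCommGroup E] [NormedSpace ℝ E] {f : V → E} {v : V} {k : ℕ}
    (hf : f =ᶠ[𝓝 v] 0) : iteratedFDeriv ℝ k f v = 0 := by
  rw [(hf.iteratedFDeriv ℝ k).self_of_nhds, iteratedFDeriv_zero, Pi.zero_apply]

theorem sum_choose_mul_mul_le {k : ℕ} {p q C : ℕ → ℝ} {B : ℝ}
    (h : ∀ i ≤ k, p i * q (k - i) ≤ C i * B) :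
    ∑ i ∈ Finset.range (k + 1), (k.choose i : ℝ) * p i * q (k - i) ≤
      (∑ i ∈ Finset.range (k + 1), (k.choose i : ℝ) * C i) * B := by
  rw [Finset.sum_mul]
  refine Finset.sum_le_sum fun i hi => ?_
  rw [mul_assoc, mul_assoc]
  exact mul_le_mul_of_nonneg_left (h i (Finset.mem_range_succ_iff.1 hi)) (Nat.cast_nonneg _)

section MixedDerivatives

variable {X V E F : Type*} [NormedAddCommGroup X] [NormedSpace ℝ X]
  [NormedAddCommGroup V] [NormedSpace ℝ V] [NormedAddCommGroup E] [NormedSpace ℝ E]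
  [NormedAddCommGroup F] [NormedSpace ℝ F]

theorem contDiff_uncurry_iteratedFDeriv_right {f : X → V → E} (hf : ContDiff ℝ ∞ (uncurry f))
    (k : ℕ) : ContDiff ℝ ∞ (uncurry fun x v => iteratedFDeriv ℝ k (f x) v) := by
  induction k with
  | zero => exact (continuousMultilinearCurryFin0 ℝ V E).symm.contDiff.comp hf
  | succ k ih =>
    have hslice : ContDiff ℝ ∞ (uncurry fun (p : X × V) v => iteratedFDeriv ℝ k (f p.1) v) :=
      ih.comp (contDiff_fst.fst.prodMk contDiff_snd)
    exact (continuousMultilinearCurryLeftEquiv ℝ (fun _ : Fin (k + 1) => V) E).symm.contDiff.comp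
      (ContDiff.fderiv (n := ∞) (m := ∞) hslice contDiff_snd le_rfl)

theorem contDiff_uncurry_iteratedFDeriv_left {f : X → V → E} (hf : ContDiff ℝ ∞ (uncurry f))
    (k : ℕ) : ContDiff ℝ ∞ (uncurry fun x v => iteratedFDeriv ℝ k (fun x => f x v) x) :=
  (contDiff_uncurry_iteratedFDeriv_right (f := fun v x => f x v)
    (hf.comp (contDiff_snd.prodMk contDiff_fst)) k).comp (contDiff_snd.prodMk contDiff_fst)

theorem fderiv_fderiv_comm {f : X → V → E} (hf : ContDiff ℝ ∞ (uncurry f)) (x : X) (v : V)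
    (h : X) :
    fderiv ℝ (fun x => fderiv ℝ (f x) v) x h =
      fderiv ℝ (fun v => fderiv ℝ (fun x => f x v) x h) v := by
  have hdiff : Differentiable ℝ (uncurry f) := hf.differentiable (by simp)
  have hdiff' : Differentiable ℝ (fderiv ℝ (uncurry f)) :=
    (hf.fderiv_right (m := ∞) le_rfl).differentiable (by simp)
  have hright (x v) : fderiv ℝ (f x) v =
      (fderiv ℝ (uncurry f) (x, v)).comp (ContinuousLinearMap.inr ℝ X V) :=
    ((hdiff (x, v)).hasFDerivAt.comp v (hasFDerivAt_prodMk_right x v)).fderiv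
  have hleft (x v) : fderiv ℝ (fun x => f x v) x =
      (fderiv ℝ (uncurry f) (x, v)).comp (ContinuousLinearMap.inl ℝ X V) :=
    (HasFDerivAt.comp (g := uncurry f) (f := fun x => (x, v)) x (hdiff (x, v)).hasFDerivAt
      (hasFDerivAt_prodMk_left x v)).fderiv
  have hright' := ((ContinuousLinearMap.compL ℝ V (X × V) E).flip
    (ContinuousLinearMap.inr ℝ X V)).hasFDerivAt.comp x
      (HasFDerivAt.comp (f := fun x => (x, v)) x (hdiff' (x, v)).hasFDerivAt
        (hasFDerivAt_prodMk_left x v))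
  have hleft' := (ContinuousLinearMap.apply ℝ E (h, (0 : V))).hasFDerivAt.comp v
      (HasFDerivAt.comp (f := fun v => (x, v)) v (hdiff' (x, v)).hasFDerivAt
        (hasFDerivAt_prodMk_right x v))
  have hsymm : IsSymmSndFDerivAt ℝ (uncurry f) (x, v) :=
    hf.contDiffAt.isSymmSndFDerivAt (by simpa using ENat.LEInfty.out)
  simp only [hright, hleft]
  ext k
  calc _ = fderiv ℝ (fderiv ℝ (uncurry f)) (x, v) (h, 0) (0, k) :=
        DFunLike.congr_fun (DFunLike.congr_fun hright'.fderiv h) k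
    _ = fderiv ℝ (fderiv ℝ (uncurry f)) (x, v) (0, k) (h, 0) := hsymm _ _
    _ = _ := (DFunLike.congr_fun hleft'.fderiv k).symm

theorem fderiv_iteratedFDeriv_comm {f : X → V → E} (hf : ContDiff ℝ ∞ (uncurry f)) (α : ℕ)
    (x : X) (v : V) (h : X) :
    fderiv ℝ (fun x => iteratedFDeriv ℝ α (f x) v) x h =
      iteratedFDeriv ℝ α (fun v => fderiv ℝ (fun x => f x v) x h) v := by
  induction α generalizing v with
  | zero =>
    exact DFunLike.congr_fun ((continuousMultilinearCurryFin0 ℝ V E).symm.comp_fderiv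
      (f := fun x => f x v)) h
  | succ α ih =>
    let uncurryLeft : (V →L[ℝ] V [×α]→L[ℝ] E) ≃ₗᵢ[ℝ] V [×(α + 1)]→L[ℝ] E :=
      (continuousMultilinearCurryLeftEquiv ℝ (fun _ => V) E).symm
    have huncurry := LinearIsometryEquiv.comp_fderiv (𝕜 := ℝ) uncurryLeft (x := x)
      (f := fun x => fderiv ℝ (iteratedFDeriv ℝ α (f x)) v)
    calc fderiv ℝ (fun x => iteratedFDeriv ℝ (α + 1) (f x) v) x h
        = uncurryLeft (fderiv ℝ (fun x => fderiv ℝ (iteratedFDeriv ℝ α (f x)) v) x h) :=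
          DFunLike.congr_fun huncurry h
      _ = uncurryLeft
            (fderiv ℝ (fun v => fderiv ℝ (fun x => iteratedFDeriv ℝ α (f x) v) x h) v) := by
          rw [fderiv_fderiv_comm (contDiff_uncurry_iteratedFDeriv_right hf α)]
      _ = iteratedFDeriv ℝ (α + 1) (fun v => fderiv ℝ (fun x => f x v) x h) v := by
          simp only [ih]
          rfl

theorem differentiable_iteratedFDeriv_left {f : X → V → E} (hf : ContDiff ℝ ∞ (uncurry f))
    (k : ℕ) (v : V) : Differentiable ℝ (iteratedFDeriv ℝ k fun x => f x v) :=
  ((contDiff_uncurry_iteratedFDeriv_left hf k).comp (contDiff_prodMk_left v)).differentiable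
    (by simp)

theorem contDiff_uncurry_iteratedFDeriv_left_apply {f : X → V → E}
    (hf : ContDiff ℝ ∞ (uncurry f)) (k : ℕ) (h : Fin k → X) :
    ContDiff ℝ ∞ (uncurry fun x v => iteratedFDeriv ℝ k (fun x => f x v) x h) :=
  (ContinuousMultilinearMap.apply ℝ (fun _ : Fin k => X) E h).contDiff.comp
    (contDiff_uncurry_iteratedFDeriv_left hf k)

/-- The mixed derivative `∂_x^γ ∂_v^α f (x, v)` occurring in symbol estimates. It is nested, a
multilinear map in the `x`-directions valued in multilinear maps in the `v`-directions, so that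
`γ` and `α` are the total orders `|γ|` and `|α|` of the multi-indices. -/
noncomputable def mixedIteratedFDeriv (γ α : ℕ) (f : X → V → E) (x : X) (v : V) :
    X [×γ]→L[ℝ] V [×α]→L[ℝ] E :=
  iteratedFDeriv ℝ γ (fun x => iteratedFDeriv ℝ α (f x) v) x

theorem mixedIteratedFDeriv_apply {f : X → V → E} (hf : ContDiff ℝ ∞ (uncurry f)) (γ α : ℕ)
    (x : X) (v : V) (h : Fin γ → X) :
    mixedIteratedFDeriv γ α f x v h =
      iteratedFDeriv ℝ α (fun v => iteratedFDeriv ℝ γ (fun x => f x v) x h) v := by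
  induction γ generalizing x with
  | zero => rfl
  | succ γ ih =>
    have hswap := fderiv_iteratedFDeriv_comm
      (contDiff_uncurry_iteratedFDeriv_left_apply hf γ (Fin.tail h)) α x v (h 0)
    calc mixedIteratedFDeriv (γ + 1) α f x v h
        = fderiv ℝ (fun x => mixedIteratedFDeriv γ α f x v (Fin.tail h)) x (h 0) :=
          (differentiable_iteratedFDeriv_left (contDiff_uncurry_iteratedFDeriv_right hf α) γ v
            x).iteratedFDeriv_succ_apply_left'
      _ = iteratedFDeriv ℝ α (fun v =>
            fderiv ℝ (fun x => iteratedFDeriv ℝ γ (fun x => f x v) x (Fin.tail h)) x (h 0)) v := by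
          simp only [ih, hswap]
      _ = iteratedFDeriv ℝ α
            (fun v => iteratedFDeriv ℝ (γ + 1) (fun x => f x v) x h) v := by
          congr 1 with v
          exact (differentiable_iteratedFDeriv_left hf γ v x).iteratedFDeriv_succ_apply_left'.symm

theorem norm_mixedIteratedFDeriv_clm_comp_le {f : X → V → E} (hf : ContDiff ℝ ∞ (uncurry f))
    (T : E →L[ℝ] F) (γ α : ℕ) (x : X) (v : V) :
    ‖mixedIteratedFDeriv γ α (fun x v => T (f x v)) x v‖ ≤
      ‖T‖ * ‖mixedIteratedFDeriv γ α f x v‖ := by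
  have hslice (x : X) : ContDiffAt ℝ α (f x) v :=
    (hf.comp (contDiff_prodMk_right x)).contDiffAt.of_le (mod_cast le_top)
  have houter : ContDiffAt ℝ γ (fun x => iteratedFDeriv ℝ α (f x) v) x :=
    ((contDiff_uncurry_iteratedFDeriv_right hf α).comp
      (contDiff_prodMk_left v)).contDiffAt.of_le (mod_cast le_top)
  let postcomp := ContinuousLinearMap.compContinuousMultilinearMapL ℝ (fun _ : Fin α => V) E F T
  have hpostcomp : (fun x => iteratedFDeriv ℝ α (fun v => T (f x v)) v) =
      postcomp ∘ fun x => iteratedFDeriv ℝ α (f x) v :=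
    funext fun x => T.iteratedFDeriv_comp_left (hslice x) le_rfl
  calc ‖mixedIteratedFDeriv γ α (fun x v => T (f x v)) x v‖
      = ‖iteratedFDeriv ℝ γ (postcomp ∘ fun x => iteratedFDeriv ℝ α (f x) v) x‖ := by
        rw [mixedIteratedFDeriv, hpostcomp]
    _ ≤ ‖postcomp‖ * ‖mixedIteratedFDeriv γ α f x v‖ :=
        postcomp.norm_iteratedFDeriv_comp_left houter le_rfl
    _ ≤ ‖T‖ * ‖mixedIteratedFDeriv γ α f x v‖ := by
        gcongr
        exact ContinuousLinearMap.opNorm_le_bound _ (norm_nonneg T)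
          T.norm_compContinuousMultilinearMap_le

theorem mixedIteratedFDeriv_smul_apply {f : X → V → E} {g : V → ℝ}
    (hf : ContDiff ℝ ∞ (uncurry f)) (hg : ContDiff ℝ ∞ g) (γ α : ℕ)
    (x : X) (v : V) (h : Fin γ → X) :
    mixedIteratedFDeriv γ α (fun x v => g v • f x v) x v h =
      iteratedFDeriv ℝ α (fun v => g v • iteratedFDeriv ℝ γ (fun x => f x v) x h) v := by
  have hsmooth : ContDiff ℝ ∞ (uncurry fun x v => g v • f x v) := (hg.comp contDiff_snd).smul hf
  rw [mixedIteratedFDeriv_apply hsmooth]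
  congr 1 with v
  have hslice : ContDiffAt ℝ γ (fun x => f x v) x :=
    (hf.comp (contDiff_prodMk_left v)).contDiffAt.of_le (mod_cast le_top)
  rw [iteratedFDeriv_const_smul_apply' hslice, smul_apply]

theorem norm_mixedIteratedFDeriv_smul_le {f : X → V → E} {g : V → ℝ}
    (hf : ContDiff ℝ ∞ (uncurry f)) (hg : ContDiff ℝ ∞ g) (γ α : ℕ) (x : X) (v : V) :
    ‖mixedIteratedFDeriv γ α (fun x v => g v • f x v) x v‖ ≤
      ∑ i ∈ Finset.range (α + 1), (α.choose i : ℝ) * ‖iteratedFDeriv ℝ i g v‖ *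
        ‖mixedIteratedFDeriv γ (α - i) f x v‖ := by
  refine ContinuousMultilinearMap.opNorm_le_bound (by positivity) fun h => ?_
  have hslice : ContDiff ℝ ∞ fun v => iteratedFDeriv ℝ γ (fun x => f x v) x h :=
    (contDiff_uncurry_iteratedFDeriv_left_apply hf γ h).comp (contDiff_prodMk_right x)
  calc ‖mixedIteratedFDeriv γ α (fun x v => g v • f x v) x v h‖
      ≤ ∑ i ∈ Finset.range (α + 1), (α.choose i : ℝ) * ‖iteratedFDeriv ℝ i g v‖ *
          ‖mixedIteratedFDeriv γ (α - i) f x v h‖ := by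
        simp only [mixedIteratedFDeriv_smul_apply hf hg, mixedIteratedFDeriv_apply hf]
        exact norm_iteratedFDeriv_smul_le hg hslice v (mod_cast le_top)
    _ ≤ ∑ i ∈ Finset.range (α + 1), (α.choose i : ℝ) * ‖iteratedFDeriv ℝ i g v‖ *
          (‖mixedIteratedFDeriv γ (α - i) f x v‖ * ∏ j, ‖h j‖) := by
        gcongr
        exact ContinuousMultilinearMap.le_opNorm _ h
    _ = _ := by simp only [Finset.sum_mul, mul_assoc]

end MixedDerivatives

section ParametricIntegral

/-- The functions `f p` have locally uniformly compact support: near every parameter they vanish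
outside one common compact set. This is what allows `∫ w, f p w` to be differentiated in `p`. -/
def HasLocallyUniformCompactSupport {P W E : Type*} [TopologicalSpace P] [TopologicalSpace W]
    [Zero E] (f : P → W → E) : Prop :=
  ∀ p₀, ∃ K, IsCompact K ∧ ∀ᶠ p in 𝓝 p₀, ∀ w ∉ K, f p w = 0

theorem HasLocallyUniformCompactSupport.hasCompactSupport {P W E : Type*} [TopologicalSpace P]
    [TopologicalSpace W] [R1Space W] [Zero E] {f : P → W → E}
    (hf : HasLocallyUniformCompactSupport f) (p : P) : HasCompactSupport (f p) := by
  obtain ⟨K, hK, hfK⟩ := hf p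
  exact HasCompactSupport.intro hK hfK.self_of_nhds

theorem HasLocallyUniformCompactSupport.of_eventuallyEq_zero {P W E F : Type*}
    [TopologicalSpace P] [TopologicalSpace W] [Zero E] [Zero F] {f : P → W → E} {g : P → W → F}
    (hf : HasLocallyUniformCompactSupport f)
    (hfg : ∀ p w, (fun q => f q w) =ᶠ[𝓝 p] 0 → g p w = 0) :
    HasLocallyUniformCompactSupport g := by
  intro p₀
  obtain ⟨K, hK, hfK⟩ := hf p₀
  exact ⟨K, hK, hfK.eventually_nhds.mono fun p hp w hw => hfg p w (hp.mono fun q hq => hq w hw)⟩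

theorem HasLocallyUniformCompactSupport.exists_integrable_bound {P W E : Type*}
    [TopologicalSpace P] [TopologicalSpace W] [T2Space W] [MeasurableSpace W]
    [OpensMeasurableSpace W] {μ : Measure W} [IsFiniteMeasureOnCompacts μ]
    [SeminormedAddCommGroup E] {f : P → W → E} (hf : HasLocallyUniformCompactSupport f)
    (hcont : Continuous (uncurry f)) (p₀ : P) :
    ∃ bound : W → ℝ, Integrable bound μ ∧ ∀ᶠ p in 𝓝 p₀, ∀ w, ‖f p w‖ ≤ bound w := by
  obtain ⟨K, hK, hfK⟩ := hf p₀
  obtain ⟨C, hC⟩ := hK.exists_bound_of_continuousOn (hcont.uncurry_left p₀).continuousOn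
  have hnear : ∀ᶠ p in 𝓝 p₀, ∀ w ∈ K, ‖f p w‖ < C + 1 :=
    hK.eventually_forall_of_forall_eventually fun w hw =>
      hcont.norm.continuousAt.eventually_lt_const ((hC w hw).trans_lt (lt_add_one C))
  refine ⟨K.indicator fun _ => C + 1,
    (integrable_indicator_iff hK.measurableSet).2 (integrableOn_const hK.measure_ne_top), ?_⟩
  filter_upwards [hfK, hnear] with p hzero hlt w
  by_cases hw : w ∈ K
  · simpa only [Set.indicator_of_mem hw] using (hlt w hw).le
  · simp only [Set.indicator_of_notMem hw, hzero w hw, norm_zero, le_refl]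

variable {P X V W E : Type*} [NormedAddCommGroup P] [NormedSpace ℝ P]
  [NormedAddCommGroup X] [NormedSpace ℝ X] [NormedAddCommGroup V] [NormedSpace ℝ V]
  [NormedAddCommGroup W] [NormedSpace ℝ W] [NormedAddCommGroup E] [NormedSpace ℝ E]
  [MeasurableSpace W] [BorelSpace W] {μ : Measure W} [IsFiniteMeasureOnCompacts μ]

theorem fderiv_integral_of_hasLocallyUniformCompactSupport {f : P → W → E}
    (hf : ContDiff ℝ ∞ (uncurry f)) (hsupp : HasLocallyUniformCompactSupport f) (p : P) :
    fderiv ℝ (fun p => ∫ w, f p w ∂μ) p = ∫ w, fderiv ℝ (fun p => f p w) p ∂μ := by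
  have hcont (p : P) : Continuous (f p) := hf.continuous.uncurry_left p
  have hcont' : Continuous (uncurry fun p w => fderiv ℝ (fun p => f p w) p) :=
    (ContDiff.fderiv (f := fun (q : P × W) p => f p q.2) (n := ∞) (m := ∞)
      (hf.comp (contDiff_snd.prodMk contDiff_fst.snd)) contDiff_fst le_rfl).continuous
  have hdiff (p : P) (w : W) : DifferentiableAt ℝ (fun p => f p w) p :=
    (hf.comp (contDiff_prodMk_left w)).differentiable (by simp) p
  have hsupp' : HasLocallyUniformCompactSupport fun p w => fderiv ℝ (fun p => f p w) p :=
    hsupp.of_eventuallyEq_zero fun p w hzero => hzero.fderiv_eq.trans (by simp)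
  obtain ⟨bound, hbound, hle⟩ := hsupp'.exists_integrable_bound (μ := μ) hcont' p
  have hmeas (p : P) : AEStronglyMeasurable (f p) μ :=
    ((hcont p).stronglyMeasurable_of_hasCompactSupport
      (hsupp.hasCompactSupport p)).aestronglyMeasurable
  have hmeas' : AEStronglyMeasurable (fun w => fderiv ℝ (fun p => f p w) p) μ :=
    ((hcont'.uncurry_left p).stronglyMeasurable_of_hasCompactSupport
      (hsupp'.hasCompactSupport p)).aestronglyMeasurable
  exact (hasFDerivAt_integral_of_dominated_of_fderiv_le hle (.of_forall hmeas)
    ((hcont p).integrable_of_hasCompactSupport (hsupp.hasCompactSupport p)) hmeas'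
    (.of_forall fun w q hq => hq w) hbound
    (.of_forall fun w q _ => (hdiff q w).hasFDerivAt)).fderiv

theorem iteratedFDeriv_integral_of_hasLocallyUniformCompactSupport {f : P → W → E}
    (hf : ContDiff ℝ ∞ (uncurry f)) (hsupp : HasLocallyUniformCompactSupport f) (k : ℕ) (p : P) :
    iteratedFDeriv ℝ k (fun p => ∫ w, f p w ∂μ) p =
      ∫ w, iteratedFDeriv ℝ k (fun p => f p w) p ∂μ := by
  induction k generalizing p with
  | zero =>
    let curryFin0 := (continuousMultilinearCurryFin0 ℝ P E).symm.toContinuousLinearEquiv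
    exact (curryFin0.integral_comp_comm _).symm
  | succ k ih =>
    let uncurryLeft : (P →L[ℝ] P [×k]→L[ℝ] E) ≃ₗᵢ[ℝ] P [×(k + 1)]→L[ℝ] E :=
      (continuousMultilinearCurryLeftEquiv ℝ (fun _ => P) E).symm
    have huncurry := uncurryLeft.toContinuousLinearEquiv.integral_comp_comm (𝕜 := ℝ) (μ := μ)
      fun w => fderiv ℝ (iteratedFDeriv ℝ k fun p => f p w) p
    calc iteratedFDeriv ℝ (k + 1) (fun p => ∫ w, f p w ∂μ) p
        = uncurryLeft (fderiv ℝ (fun p => ∫ w, iteratedFDeriv ℝ k (fun p => f p w) p ∂μ) p) := by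
          simp only [← ih]
          rfl
      _ = uncurryLeft (∫ w, fderiv ℝ (iteratedFDeriv ℝ k fun p => f p w) p ∂μ) := by
          rw [fderiv_integral_of_hasLocallyUniformCompactSupport
            (contDiff_uncurry_iteratedFDeriv_left hf k) (hsupp.of_eventuallyEq_zero fun p w hzero =>
              iteratedFDeriv_eq_zero_of_eventuallyEq_zero hzero)]
      _ = ∫ w, iteratedFDeriv ℝ (k + 1) (fun p => f p w) p ∂μ :=
          huncurry.symm

theorem mixedIteratedFDeriv_integral_of_hasLocallyUniformCompactSupport {f : X → V → W → E}
    (hf : ContDiff ℝ ∞ fun p : X × V × W => f p.1 p.2.1 p.2.2)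
    (hsupp : HasLocallyUniformCompactSupport fun p : X × V => f p.1 p.2) (γ α : ℕ)
    (x : X) (v : V) :
    mixedIteratedFDeriv γ α (fun x v => ∫ w, f x v w ∂μ) x v =
      ∫ w, mixedIteratedFDeriv γ α (fun x v => f x v w) x v ∂μ := by
  have hsupp_right (x : X) : HasLocallyUniformCompactSupport (f x) := fun v₀ => by
    obtain ⟨K, hK, hfK⟩ := hsupp (x, v₀)
    exact ⟨K, hK, hfK.curry_nhds.self_of_nhds⟩
  have hsupp_left : HasLocallyUniformCompactSupport
      fun x w => iteratedFDeriv ℝ α (fun v => f x v w) v := fun x₀ => by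
    obtain ⟨K, hK, hfK⟩ := hsupp (x₀, v)
    exact ⟨K, hK, hfK.curry_nhds.mono fun x hx w hw =>
      iteratedFDeriv_eq_zero_of_eventuallyEq_zero (hx.mono fun v' hv' => hv' w hw)⟩
  have hright (x : X) : ContDiff ℝ ∞ (uncurry (f x)) := hf.comp (contDiff_prodMk_right x)
  have hderiv : ContDiff ℝ ∞ (uncurry fun x w => iteratedFDeriv ℝ α (fun v => f x v w) v) :=
    (contDiff_uncurry_iteratedFDeriv_right (f := fun (q : X × W) v => f q.1 v q.2)
      (hf.comp (contDiff_fst.fst.prodMk (contDiff_snd.prodMk contDiff_fst.snd))) α).comp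
      (contDiff_id.prodMk contDiff_const)
  simp only [mixedIteratedFDeriv,
    iteratedFDeriv_integral_of_hasLocallyUniformCompactSupport (hright _) (hsupp_right _),
    iteratedFDeriv_integral_of_hasLocallyUniformCompactSupport hderiv hsupp_left]

end ParametricIntegral

section Bracket

variable {V W : Type*}

/-- The Japanese bracket `⟨v⟩ = (1 + ‖v‖²)^{1/2}` on a normed space. The bracket of a pair `(v, w)`
is written `bracket (WithLp.toLp 2 (v, w))`, as the product type itself carries the sup norm. -/
noncomputable def bracket [Norm V] (v : V) : ℝ :=
  √(1 + ‖v‖ ^ 2)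

theorem one_le_bracket [Norm V] (v : V) : 1 ≤ bracket v :=
  Real.one_le_sqrt.2 (le_add_of_nonneg_right (sq_nonneg ‖v‖))

theorem bracket_pos [Norm V] (v : V) : 0 < bracket v :=
  one_pos.trans_le (one_le_bracket v)

theorem norm_le_bracket [Norm V] (v : V) : ‖v‖ ≤ bracket v :=
  Real.le_sqrt_of_sq_le (le_add_of_nonneg_left zero_le_one)

theorem mul_bracket_rpow_le_abs_mul_bracket_rpow [Norm V] {r s : ℝ} (hrs : r ≤ s) (C : ℝ) (v : V) :
    C * bracket v ^ r ≤ |C| * bracket v ^ s :=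
  mul_le_mul (le_abs_self C) (Real.rpow_le_rpow_of_exponent_le (one_le_bracket v) hrs)
    (Real.rpow_nonneg (bracket_pos v).le r) (abs_nonneg C)

theorem bracket_rpow [Norm V] (v : V) (r : ℝ) : bracket v ^ r = (1 + ‖v‖ ^ 2) ^ (r / 2) := by
  rw [bracket, Real.sqrt_eq_rpow, ← Real.rpow_mul (by positivity), one_div_mul_eq_div]

theorem bracket_toLp_prod [NormedAddCommGroup V] [NormedAddCommGroup W] (v : V) (w : W) :
    bracket (WithLp.toLp 2 (v, w)) = √(1 + ‖v‖ ^ 2 + ‖w‖ ^ 2) := by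
  rw [bracket, WithLp.prod_norm_sq_eq_of_L2, add_assoc, WithLp.toLp_fst, WithLp.toLp_snd]

theorem bracket_toLp_prod_rpow_le [NormedAddCommGroup V] [NormedAddCommGroup W] {v : V} {w : W}
    {R : ℝ} (hw : ‖w‖ ≤ R * bracket v) (m : ℝ) :
    bracket (WithLp.toLp 2 (v, w)) ^ m ≤ √(1 + R ^ 2) ^ |m| * bracket v ^ m := by
  have hlower : bracket v ≤ bracket (WithLp.toLp 2 (v, w)) := by
    rw [bracket_toLp_prod]
    exact Real.sqrt_le_sqrt (le_add_of_nonneg_right (sq_nonneg _))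
  have hupper : bracket (WithLp.toLp 2 (v, w)) ≤ √(1 + R ^ 2) * bracket v := by
    have hsq : ‖w‖ ^ 2 ≤ R ^ 2 * (1 + ‖v‖ ^ 2) := by
      rw [← Real.sq_sqrt (by positivity : 0 ≤ 1 + ‖v‖ ^ 2), ← mul_pow]
      exact pow_le_pow_left₀ (norm_nonneg w) hw 2
    rw [bracket_toLp_prod, bracket, ← Real.sqrt_mul (by positivity)]
    exact Real.sqrt_le_sqrt (by linarith)
  have hR : 1 ≤ √(1 + R ^ 2) := Real.one_le_sqrt.2 (le_add_of_nonneg_right (sq_nonneg R))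
  have hv := (bracket_pos v).le
  rcases le_total 0 m with hm | hm
  · rw [abs_of_nonneg hm, ← Real.mul_rpow (by positivity) hv]
    exact Real.rpow_le_rpow (bracket_pos _).le hupper hm
  · calc bracket (WithLp.toLp 2 (v, w)) ^ m ≤ bracket v ^ m :=
          Real.rpow_le_rpow_of_nonpos (bracket_pos v) hlower hm
      _ ≤ √(1 + R ^ 2) ^ |m| * bracket v ^ m :=
          le_mul_of_one_le_left (Real.rpow_nonneg hv m) (Real.one_le_rpow hR (abs_nonneg m))

theorem integrable_bracket_rpow [NormedAddCommGroup W] [NormedSpace ℝ W] [FiniteDimensional ℝ W]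
    [MeasurableSpace W] [BorelSpace W] {μ : Measure W} [μ.IsAddHaarMeasure] {r : ℝ}
    (hr : r < -finrank ℝ W) : Integrable (fun w : W => bracket w ^ r) μ := by
  simpa only [bracket_rpow, neg_neg] using
    integrable_rpow_neg_one_add_norm_sq (μ := μ) (lt_neg_of_lt_neg hr)

theorem norm_iteratedFDeriv_clm_le_bracket_rpow [NormedAddCommGroup V] [NormedSpace ℝ V]
    [NormedAddCommGroup W] [NormedSpace ℝ W] (T : V →L[ℝ] W) (k : ℕ) (v : V) :
    ‖iteratedFDeriv ℝ k T v‖ ≤ ‖T‖ * bracket v ^ (1 - k : ℝ) := by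
  match k with
  | 0 => simpa using T.le_opNorm_of_le (norm_le_bracket v)
  | 1 => simp [norm_iteratedFDeriv_one]
  | k + 2 =>
    rw [← norm_iteratedFDeriv_fderiv, (funext fun _ => T.fderiv : fderiv ℝ T = fun _ => T),
      iteratedFDeriv_succ_const, Pi.zero_apply, norm_zero]
    exact mul_nonneg (norm_nonneg T) (Real.rpow_nonneg (bracket_pos v).le _)

variable [NormedAddCommGroup V] [InnerProductSpace ℝ V]

theorem contDiff_bracket_rpow (r : ℝ) : ContDiff ℝ ∞ fun v : V => bracket v ^ r := by
  simp only [bracket_rpow]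
  exact (contDiff_const.add (contDiff_norm_sq ℝ)).rpow_const_of_ne fun v => by positivity

theorem fderiv_bracket_rpow (r : ℝ) (v : V) :
    fderiv ℝ (fun v : V => bracket v ^ r) v = r • bracket v ^ (r - 2) • innerSL ℝ v := by
  have hsq : HasFDerivAt (fun v : V => 1 + ‖v‖ ^ 2) (2 • innerSL ℝ v) v :=
    (hasStrictFDerivAt_norm_sq v).hasFDerivAt.const_add 1
  simp only [bracket_rpow]
  rw [(hsq.rpow_const (p := r / 2) (.inl (by positivity))).fderiv,
    ← Nat.cast_smul_eq_nsmul ℝ, smul_smul, smul_smul]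
  congr 1
  ring_nf

theorem norm_iteratedFDeriv_succ_bracket_rpow_le (k : ℕ) (r : ℝ) (v : V) :
    ‖iteratedFDeriv ℝ (k + 1) (fun v : V => bracket v ^ r) v‖ ≤
      |r| * ∑ i ∈ Finset.range (k + 1), (k.choose i : ℝ) *
        ‖iteratedFDeriv ℝ i (fun v : V => bracket v ^ (r - 2)) v‖ *
          bracket v ^ (1 - (k - i : ℕ) : ℝ) := by
  let T : V →L[ℝ] V →L[ℝ] ℝ := innerSL ℝ
  have hT (j : ℕ) : ‖iteratedFDeriv ℝ j T v‖ ≤ bracket v ^ (1 - j : ℝ) :=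
    (norm_iteratedFDeriv_clm_le_bracket_rpow T j v).trans
      (mul_le_of_le_one_left (Real.rpow_nonneg (bracket_pos v).le _) (norm_innerSL_le ℝ))
  have hsmooth : ContDiff ℝ ∞ fun v : V => bracket v ^ (r - 2) := contDiff_bracket_rpow (r - 2)
  have hsmooth' : ContDiff ℝ ∞ fun v : V => bracket v ^ (r - 2) • T v := hsmooth.smul T.contDiff
  have hfderiv : fderiv ℝ (fun v : V => bracket v ^ r) =
      fun v => r • bracket v ^ (r - 2) • T v :=
    funext (fderiv_bracket_rpow r)
  calc ‖iteratedFDeriv ℝ (k + 1) (fun v : V => bracket v ^ r) v‖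
      = |r| * ‖iteratedFDeriv ℝ k (fun v : V => bracket v ^ (r - 2) • T v) v‖ := by
        rw [← norm_iteratedFDeriv_fderiv, hfderiv, iteratedFDeriv_const_smul_apply'
          (hsmooth'.contDiffAt.of_le (mod_cast le_top)), norm_smul, Real.norm_eq_abs]
    _ ≤ |r| * ∑ i ∈ Finset.range (k + 1), (k.choose i : ℝ) *
          ‖iteratedFDeriv ℝ i (fun v : V => bracket v ^ (r - 2)) v‖ *
            ‖iteratedFDeriv ℝ (k - i) T v‖ := by
        gcongr
        exact norm_iteratedFDeriv_smul_le hsmooth T.contDiff v (mod_cast le_top)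
    _ ≤ _ := by
        gcongr
        exact hT _

theorem exists_norm_iteratedFDeriv_bracket_rpow_le (k : ℕ) (r : ℝ) :
    ∃ C, ∀ v : V,
      ‖iteratedFDeriv ℝ k (fun v : V => bracket v ^ r) v‖ ≤ C * bracket v ^ (r - k) := by
  induction k using Nat.strong_induction_on generalizing r with
  | _ k ih =>
  rcases k with - | k
  · exact ⟨1, fun v => by simp [abs_of_pos (Real.rpow_pos_of_pos (bracket_pos v) r)]⟩
  choose! C hC using fun i (hi : i ≤ k) => ih i (Nat.lt_succ_of_le hi) (r - 2)
  refine ⟨|r| * ∑ i ∈ Finset.range (k + 1), (k.choose i : ℝ) * C i, fun v => ?_⟩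
  rw [mul_assoc]
  refine (norm_iteratedFDeriv_succ_bracket_rpow_le k r v).trans
    (mul_le_mul_of_nonneg_left ?_ (abs_nonneg r))
  refine sum_choose_mul_mul_le (q := fun j => bracket v ^ (1 - j : ℝ)) fun i hi => ?_
  have hexp : r - (k + 1 : ℕ) = (r - 2 - i) + (1 - (k - i : ℕ)) := by
    push_cast [Nat.cast_sub hi]
    ring
  rw [hexp, Real.rpow_add (bracket_pos v), ← mul_assoc]
  exact mul_le_mul_of_nonneg_right (hC i hi v) (Real.rpow_nonneg (bracket_pos v).le _)

end Bracket

section Cutoff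

variable {V W F : Type*} [NormedAddCommGroup W] [NormedSpace ℝ W] [NormedAddCommGroup F]
  {ψ : W → F} {R δ : ℝ}

/-- The cutoff `ψ(⟨v⟩^{-δ} w)` to the region `‖w‖ ≲ ⟨v⟩^δ`; the parabolic region is `δ = 1/2`. -/
noncomputable def bracketCutoff [Norm V] (δ : ℝ) (ψ : W → F) (v : V) (w : W) : F :=
  ψ (bracket v ^ (-δ) • w)

theorem bracketCutoff_eq_zero [Norm V] (hψ : ∀ w, R ≤ ‖w‖ → ψ w = 0) {v : V} {w : W}
    (hw : R * bracket v ^ δ ≤ ‖w‖) : bracketCutoff δ ψ v w = 0 := by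
  have hpos : 0 < bracket v ^ δ := Real.rpow_pos_of_pos (bracket_pos v) δ
  refine hψ _ ?_
  rwa [norm_smul, Real.rpow_neg (bracket_pos v).le, norm_inv, Real.norm_of_nonneg hpos.le,
    le_inv_mul_iff₀ hpos, mul_comm]

variable [NormedAddCommGroup V] [InnerProductSpace ℝ V]

theorem bracketCutoff_eventuallyEq_zero (hψ : ∀ w, R ≤ ‖w‖ → ψ w = 0) {v : V} {w : W}
    (hw : R * bracket v ^ δ < ‖w‖) : (bracketCutoff δ ψ · w) =ᶠ[𝓝 v] 0 :=
  ((continuous_const.mul (contDiff_bracket_rpow δ).continuous).continuousAt.eventually_lt_const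
    hw).mono fun _ hv => bracketCutoff_eq_zero hψ hv.le

theorem hasLocallyUniformCompactSupport_bracketCutoff [ProperSpace W]
    (hψ_supp : HasCompactSupport ψ) (δ : ℝ) :
    HasLocallyUniformCompactSupport (bracketCutoff δ ψ : V → W → F) := by
  intro v₀
  obtain ⟨R, -, hR⟩ := hψ_supp.exists_pos_le_norm
  have hcont : Continuous fun v : V => R * bracket v ^ δ :=
    continuous_const.mul (contDiff_bracket_rpow δ).continuous
  refine ⟨Metric.closedBall 0 (R * bracket v₀ ^ δ + 1), isCompact_closedBall _ _, ?_⟩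
  filter_upwards [hcont.continuousAt.eventually_lt_const (lt_add_one _)] with v hv w hw
  rw [mem_closedBall_zero_iff, not_le] at hw
  exact bracketCutoff_eq_zero hR (hv.trans hw).le

theorem hasLocallyUniformCompactSupport_bracketCutoff_smul {X E : Type*}
    [TopologicalSpace X] [NormedAddCommGroup E] [NormedSpace ℝ E] [ProperSpace W] {ψ : W → ℝ}
    (hψ_supp : HasCompactSupport ψ) (δ : ℝ) (a : X → V → W → E) :
    HasLocallyUniformCompactSupport
      fun (p : X × V) w => bracketCutoff δ ψ p.2 w • a p.1 p.2 w := by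
  intro p₀
  obtain ⟨K, hK, hzero⟩ := hasLocallyUniformCompactSupport_bracketCutoff hψ_supp δ p₀.2
  exact ⟨K, hK, (continuous_snd.tendsto p₀).eventually hzero |>.mono
    fun p hp w hw => smul_eq_zero_of_left (hp w hw) (a p.1 p.2 w)⟩

theorem exists_norm_iteratedFDeriv_bracket_rpow_smul_le (δ R : ℝ) (k : ℕ) :
    ∃ C, ∀ (v : V) (w : W), ‖w‖ ≤ R * bracket v ^ δ →
      ‖iteratedFDeriv ℝ k (fun v : V => bracket v ^ (-δ) • w) v‖ ≤ C * (bracket v)⁻¹ ^ k := by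
  obtain ⟨C, hC⟩ := exists_norm_iteratedFDeriv_bracket_rpow_le (V := V) k (-δ)
  refine ⟨R * C, fun v w hw => ?_⟩
  have hv := bracket_pos v
  calc ‖iteratedFDeriv ℝ k (fun v : V => bracket v ^ (-δ) • w) v‖
      ≤ ‖w‖ * ‖iteratedFDeriv ℝ k (fun v : V => bracket v ^ (-δ)) v‖ := by
        rw [← ContinuousLinearMap.norm_toSpanSingleton (𝕜 := ℝ) w]
        exact (ContinuousLinearMap.toSpanSingleton ℝ w).norm_iteratedFDeriv_comp_left
          (contDiff_bracket_rpow (-δ)).contDiffAt (mod_cast le_top)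
    _ ≤ (R * bracket v ^ δ) * (C * bracket v ^ (-δ - k)) :=
        mul_le_mul hw (hC v) (norm_nonneg _) ((norm_nonneg w).trans hw)
    _ = R * C * (bracket v)⁻¹ ^ k := by
        rw [inv_pow, ← Real.rpow_natCast, Real.rpow_sub hv, Real.rpow_neg hv.le]
        field_simp

variable [NormedSpace ℝ F]

theorem contDiff_uncurry_bracketCutoff (hψ : ContDiff ℝ ∞ ψ) (δ : ℝ) :
    ContDiff ℝ ∞ (uncurry (bracketCutoff δ ψ : V → W → F)) :=
  hψ.comp (((contDiff_bracket_rpow (-δ)).comp contDiff_fst).smul contDiff_snd)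

theorem exists_norm_iteratedFDeriv_le_of_hasCompactSupport (hψ : ContDiff ℝ ∞ ψ)
    (hψ_supp : HasCompactSupport ψ) (k : ℕ) :
    ∃ C, ∀ i ≤ k, ∀ w, ‖iteratedFDeriv ℝ i ψ w‖ ≤ C := by
  choose C hC using fun i : ℕ => (hψ_supp.iteratedFDeriv (𝕜 := ℝ) i).exists_bound_of_continuous
    (hψ.continuous_iteratedFDeriv (mod_cast le_top))
  refine ⟨∑ i ∈ Finset.range (k + 1), C i, fun i hi w => (hC i w).trans ?_⟩
  exact Finset.single_le_sum (fun j _ => (norm_nonneg _).trans (hC j 0))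
    (Finset.mem_range_succ_iff.2 hi)

theorem exists_norm_iteratedFDeriv_bracketCutoff_le (hψ : ContDiff ℝ ∞ ψ)
    (hψ_supp : HasCompactSupport ψ) (δ : ℝ) (k : ℕ) :
    ∃ C, ∀ (v : V) (w : W),
      ‖iteratedFDeriv ℝ k (bracketCutoff δ ψ · w) v‖ ≤ C * bracket v ^ (-k : ℝ) := by
  obtain ⟨R, -, hR⟩ := hψ_supp.exists_pos_le_norm
  obtain ⟨C, hC⟩ := exists_norm_iteratedFDeriv_le_of_hasCompactSupport hψ hψ_supp k
  choose A hA using exists_norm_iteratedFDeriv_bracket_rpow_smul_le (V := V) (W := W) δ R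
  let D := 1 + ∑ i ∈ Finset.range (k + 1), |A i|
  have hD_one : 1 ≤ D := le_add_of_nonneg_right (by positivity)
  have hD (i : ℕ) (hi_one : 1 ≤ i) (hi : i ≤ k) : A i ≤ D ^ i :=
    calc A i ≤ |A i| := le_abs_self _
      _ ≤ ∑ i ∈ Finset.range (k + 1), |A i| :=
          Finset.single_le_sum (f := fun i => |A i|) (fun _ _ => abs_nonneg _)
            (Finset.mem_range_succ_iff.2 hi)
      _ ≤ D := le_add_of_nonneg_left zero_le_one
      _ ≤ D ^ i := le_self_pow₀ hD_one (Nat.one_le_iff_ne_zero.1 hi_one)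
  refine ⟨k.factorial * C * D ^ k, fun v w => ?_⟩
  have hv := bracket_pos v
  rcases lt_or_ge (R * bracket v ^ δ) ‖w‖ with hout | hin
  · have hC_nonneg : 0 ≤ C := (norm_nonneg _).trans (hC 0 k.zero_le 0)
    rw [iteratedFDeriv_eq_zero_of_eventuallyEq_zero (bracketCutoff_eventuallyEq_zero hR hout),
      norm_zero]
    positivity
  have hinner (i : ℕ) (hi_one : 1 ≤ i) (hi : i ≤ k) :
      ‖iteratedFDeriv ℝ i (fun v : V => bracket v ^ (-δ) • w) v‖ ≤ (D * (bracket v)⁻¹) ^ i := by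
    rw [mul_pow]
    exact (hA i v w hin).trans (by gcongr; exact hD i hi_one hi)
  calc ‖iteratedFDeriv ℝ k (bracketCutoff δ ψ · w) v‖
      ≤ k.factorial * C * (D * (bracket v)⁻¹) ^ k :=
        norm_iteratedFDeriv_comp_le hψ ((contDiff_bracket_rpow (-δ)).smul contDiff_const)
          (mod_cast le_top) v (fun i hi => hC i hi _) hinner
    _ = k.factorial * C * D ^ k * bracket v ^ (-k : ℝ) := by
        rw [mul_pow, inv_pow, Real.rpow_neg hv.le, Real.rpow_natCast, mul_assoc _ (D ^ k)]

theorem exists_norm_iteratedFDeriv_bracketCutoff_mul_bracket_rpow_le (hδ : δ ≤ 1)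
    (hψ : ContDiff ℝ ∞ ψ) (hψ_supp : HasCompactSupport ψ) (k : ℕ) (m : ℝ) :
    ∃ C, ∀ (v : V) (w : W), ‖iteratedFDeriv ℝ k (bracketCutoff δ ψ · w) v‖ *
      bracket (WithLp.toLp 2 (v, w)) ^ m ≤ C * bracket v ^ (m - k) := by
  obtain ⟨R, hR_pos, hR⟩ := hψ_supp.exists_pos_le_norm
  obtain ⟨C, hC⟩ := exists_norm_iteratedFDeriv_bracketCutoff_le (V := V) hψ hψ_supp δ k
  refine ⟨|C| * √(1 + R ^ 2) ^ |m|, fun v w => ?_⟩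
  have hv := bracket_pos v
  rcases lt_or_ge (R * bracket v ^ δ) ‖w‖ with hout | hin
  · rw [iteratedFDeriv_eq_zero_of_eventuallyEq_zero (bracketCutoff_eventuallyEq_zero hR hout),
      norm_zero, zero_mul]
    positivity
  have hw : ‖w‖ ≤ R * bracket v :=
    hin.trans (mul_le_mul_of_nonneg_left
      (Real.rpow_le_self_of_one_le (one_le_bracket v) hδ) hR_pos.le)
  calc ‖iteratedFDeriv ℝ k (bracketCutoff δ ψ · w) v‖ * bracket (WithLp.toLp 2 (v, w)) ^ m
      ≤ |C| * bracket v ^ (-k : ℝ) * (√(1 + R ^ 2) ^ |m| * bracket v ^ m) := by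
        refine mul_le_mul ((hC v w).trans ?_) (bracket_toLp_prod_rpow_le hw m)
          (Real.rpow_nonneg (bracket_pos _).le m) (by positivity)
        gcongr
        exact le_abs_self C
    _ = |C| * √(1 + R ^ 2) ^ |m| * bracket v ^ (m - k) := by
        rw [sub_eq_add_neg, Real.rpow_add hv]
        ring

end Cutoff

section Symbols

variable {X V W E : Type*} [NormedAddCommGroup X] [NormedSpace ℝ X]
  [NormedAddCommGroup V] [InnerProductSpace ℝ V] [NormedAddCommGroup W] [NormedSpace ℝ W]
  [NormedAddCommGroup E] [NormedSpace ℝ E]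

theorem exists_norm_mixedIteratedFDeriv_bracketCutoff_smul_le {δ M₁ M₂ : ℝ} (hδ : δ ≤ 1)
    {a : X → V → W → E}
    (ha_smooth : ContDiff ℝ ∞ fun p : X × V × W => a p.1 p.2.1 p.2.2) {γ : ℕ}
    (ha : ∀ α : ℕ, ∃ C, ∀ x v w, ‖mixedIteratedFDeriv γ α (fun x v => a x v w) x v‖ ≤
      C * bracket (WithLp.toLp 2 (v, w)) ^ (M₁ - α) * bracket w ^ M₂)
    {ψ : W → ℝ} (hψ : ContDiff ℝ ∞ ψ) (hψ_supp : HasCompactSupport ψ) (α : ℕ) :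
    ∃ C, ∀ x v w,
      ‖mixedIteratedFDeriv γ α (fun x v => bracketCutoff δ ψ v w • a x v w) x v‖ ≤
        C * (bracket v ^ (M₁ - α) * bracket w ^ M₂) := by
  choose A hA using ha
  choose B hB using fun i => exists_norm_iteratedFDeriv_bracketCutoff_mul_bracket_rpow_le (V := V)
    hδ hψ hψ_supp i (M₁ - (α - i : ℕ))
  refine ⟨∑ i ∈ Finset.range (α + 1), (α.choose i : ℝ) * (|A (α - i)| * B i), fun x v w => ?_⟩
  have ha_slice : ContDiff ℝ ∞ (uncurry fun x v => a x v w) :=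
    ha_smooth.comp (contDiff_fst.prodMk (contDiff_snd.prodMk contDiff_const))
  have hχ_slice : ContDiff ℝ ∞ (bracketCutoff δ ψ · w : V → ℝ) :=
    (contDiff_uncurry_bracketCutoff hψ δ).comp (contDiff_prodMk_left w)
  refine (norm_mixedIteratedFDeriv_smul_le ha_slice hχ_slice γ α x v).trans
    (sum_choose_mul_mul_le (p := fun i => ‖iteratedFDeriv ℝ i (bracketCutoff δ ψ · w) v‖)
      (q := fun j => ‖mixedIteratedFDeriv γ j (fun x v => a x v w) x v‖) fun i hi => ?_)
  have hw : 0 ≤ bracket w ^ M₂ := Real.rpow_nonneg (bracket_pos w).le M₂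
  have hexp : M₁ - (α - i : ℕ) - i = M₁ - α := by
    push_cast [Nat.cast_sub hi]
    ring
  calc ‖iteratedFDeriv ℝ i (bracketCutoff δ ψ · w) v‖ *
        ‖mixedIteratedFDeriv γ (α - i) (fun x v => a x v w) x v‖
      ≤ ‖iteratedFDeriv ℝ i (bracketCutoff δ ψ · w) v‖ * (|A (α - i)| *
          bracket (WithLp.toLp 2 (v, w)) ^ (M₁ - (α - i : ℕ)) * bracket w ^ M₂) := by
        gcongr
        refine (hA (α - i) x v w).trans ?_
        gcongr
        · exact Real.rpow_nonneg (bracket_pos _).le _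
        · exact le_abs_self _
    _ = |A (α - i)| * (‖iteratedFDeriv ℝ i (bracketCutoff δ ψ · w) v‖ *
          bracket (WithLp.toLp 2 (v, w)) ^ (M₁ - (α - i : ℕ))) * bracket w ^ M₂ := by
        ring
    _ ≤ |A (α - i)| * (B i * bracket v ^ (M₁ - α)) * bracket w ^ M₂ := by
        rw [← hexp]
        exact mul_le_mul_of_nonneg_right
          (mul_le_mul_of_nonneg_left (hB i v w) (abs_nonneg _)) hw
    _ = |A (α - i)| * B i * (bracket v ^ (M₁ - α) * bracket w ^ M₂) := by
        ring

theorem norm_mixedIteratedFDeriv_le_iteratedFDeriv_zero {a : X → V → W → E}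
    (ha : ContDiff ℝ ∞ fun p : X × V × W => a p.1 p.2.1 p.2.2) (γ α : ℕ) (x : X) (v : V) (w : W) :
    ‖mixedIteratedFDeriv γ α (fun x v => a x v w) x v‖ ≤
      ‖mixedIteratedFDeriv γ α (fun x v => iteratedFDeriv ℝ 0 (a x v) w) x v‖ := by
  let curryFin0 := continuousMultilinearCurryFin0 ℝ W E
  have hsmooth : ContDiff ℝ ∞ (uncurry fun x v => iteratedFDeriv ℝ 0 (a x v) w) :=
    curryFin0.symm.contDiff.comp
      (ha.comp (contDiff_fst.prodMk (contDiff_snd.prodMk contDiff_const)))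
  refine (norm_mixedIteratedFDeriv_clm_comp_le hsmooth
    curryFin0.toLinearIsometry.toContinuousLinearMap γ α x v).trans ?_
  exact mul_le_of_le_one_left (by positivity)
    curryFin0.toLinearIsometry.norm_toContinuousLinearMap_le

theorem stmt15_general [FiniteDimensional ℝ W] [MeasurableSpace W] [BorelSpace W]
    {μ : Measure W} [μ.IsAddHaarMeasure] {δ M₁ M₂ : ℝ} (hδ : δ ≤ 1) (hM₂ : M₂ < -finrank ℝ W)
    {a : X → V → W → E}
    (ha_smooth : ContDiff ℝ ∞ fun p : X × V × W => a p.1 p.2.1 p.2.2) {γ : ℕ}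
    (ha : ∀ α : ℕ, ∃ C, ∀ x v w, ‖mixedIteratedFDeriv γ α (fun x v => a x v w) x v‖ ≤
      C * bracket (WithLp.toLp 2 (v, w)) ^ (M₁ - α) * bracket w ^ M₂)
    {ψ : W → ℝ} (hψ : ContDiff ℝ ∞ ψ) (hψ_supp : HasCompactSupport ψ) (α : ℕ) :
    ∃ C, ∀ x v,
      ‖mixedIteratedFDeriv γ α (fun x v => ∫ w, bracketCutoff δ ψ v w • a x v w ∂μ) x v‖ ≤
        C * bracket v ^ (M₁ - α) := by
  have : ProperSpace W := FiniteDimensional.proper ℝ W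
  obtain ⟨C, hC⟩ :=
    exists_norm_mixedIteratedFDeriv_bracketCutoff_smul_le hδ ha_smooth ha hψ hψ_supp α
  have hsmooth : ContDiff ℝ ∞
      fun p : X × V × W => bracketCutoff δ ψ p.2.1 p.2.2 • a p.1 p.2.1 p.2.2 :=
    ((contDiff_uncurry_bracketCutoff hψ δ).comp contDiff_snd).smul ha_smooth
  refine ⟨C * ∫ w, bracket w ^ M₂ ∂μ, fun x v => ?_⟩
  rw [mixedIteratedFDeriv_integral_of_hasLocallyUniformCompactSupport hsmooth
    (hasLocallyUniformCompactSupport_bracketCutoff_smul hψ_supp δ a)]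
  calc ‖∫ w, mixedIteratedFDeriv γ α (fun x v => bracketCutoff δ ψ v w • a x v w) x v ∂μ‖
      ≤ ∫ w, C * (bracket v ^ (M₁ - α) * bracket w ^ M₂) ∂μ :=
        norm_integral_le_of_norm_le (((integrable_bracket_rpow hM₂).const_mul _).const_mul _)
          (.of_forall (hC x v))
    _ = C * (∫ w, bracket w ^ M₂ ∂μ) * bracket v ^ (M₁ - α) := by
        rw [integral_const_mul, integral_const_mul]
        ring

end Symbols

/-- Parabolic decomposition (case `M₂ < −d₂`): integrating a symbol-valued symbol of
order `(M₁,M₂)` over `ξ″` against a cutoff supported where `|ξ″| ≲ ⟨ξ′⟩^{1/2}`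
produces a type-`(1/2,1/2)` symbol of order `M₁` in `ξ′`. -/
theorem stmt15 (n d₁ d₂ : ℕ) (hn : 1 ≤ n) (hd₁ : 1 ≤ d₁) (hd₂ : 1 ≤ d₂)
    (M₁ M₂ : ℝ) (hM₂ : M₂ < -(d₂ : ℝ))
    (a : EuclideanSpace ℝ (Fin n) → EuclideanSpace ℝ (Fin d₁) →
      EuclideanSpace ℝ (Fin d₂) → ℂ)
    (ha_smooth : ContDiff ℝ (⊤ : ℕ∞)
      (fun p : EuclideanSpace ℝ (Fin n) × EuclideanSpace ℝ (Fin d₁) ×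
          EuclideanSpace ℝ (Fin d₂) => a p.1 p.2.1 p.2.2))
    (ha : ∀ γ α β : ℕ, ∃ C : ℝ, ∀ x ξ' ξ'',
      ‖iteratedFDeriv ℝ γ (fun x => iteratedFDeriv ℝ α (fun ξ' =>
          iteratedFDeriv ℝ β (fun ξ'' => a x ξ' ξ'') ξ'') ξ') x‖ ≤
        C * jap2 ξ' ξ'' ^ (M₁ - (α : ℝ)) * jap ξ'' ^ (M₂ - (β : ℝ)))
    (ψ : EuclideanSpace ℝ (Fin d₂) → ℝ)
    (hψ_smooth : ContDiff ℝ (⊤ : ℕ∞) ψ) (hψ_supp : HasCompactSupport ψ) :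
    ∀ γ α : ℕ, ∃ C' : ℝ, ∀ x ξ',
      ‖iteratedFDeriv ℝ γ (fun x => iteratedFDeriv ℝ α (fun ξ' =>
          ∫ ξ'' : EuclideanSpace ℝ (Fin d₂),
            a x ξ' ξ'' * (ψ ((jap ξ' ^ (-(1 / 2) : ℝ)) • ξ'') : ℂ)) ξ') x‖ ≤
        C' * jap ξ' ^ (M₁ - (α : ℝ) / 2) := by
  intro γ α
  have ha' (α : ℕ) : ∃ C, ∀ x ξ' ξ'', ‖mixedIteratedFDeriv γ α (fun x ξ' => a x ξ' ξ'') x ξ'‖ ≤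
      C * bracket (WithLp.toLp 2 (ξ', ξ'')) ^ (M₁ - α) * bracket ξ'' ^ M₂ := by
    obtain ⟨C, hC⟩ := ha γ α 0
    refine ⟨C, fun x ξ' ξ'' =>
      (norm_mixedIteratedFDeriv_le_iteratedFDeriv_zero ha_smooth γ α x ξ' ξ'').trans
        ((hC x ξ' ξ'').trans_eq ?_)⟩
    rw [bracket_toLp_prod, Nat.cast_zero, sub_zero]
    rfl
  obtain ⟨C, hC⟩ := stmt15_general (μ := volume) (δ := 1 / 2) (by norm_num)
    (by simpa using hM₂) ha_smooth ha' hψ_smooth hψ_supp α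
  refine ⟨|C|, fun x ξ' => ?_⟩
  simp only [mul_comm (a _ _ _), ← Complex.real_smul]
  exact (hC x ξ').trans (mul_bracket_rpow_le_abs_mul_bracket_rpow
    (sub_le_sub_left (half_le_self α.cast_nonneg) M₁) C ξ')
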